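/- arXiv:1303.7291 — 3 statements merged into one kernel-verified Lean document; each statement's English description precedes it below -/
import Mathlib

section
/- Let σ > 0, C > 0, G > 0 and H ≥ 0. Consider F(γ) = σ·√((G + γ)² − H²) − γ·√(C² + σ²) on the set D = {γ ∈ ℝ : γ ≥ 0 and G + γ ≥ H}. Then: if √(C² + σ²)·H ≤ C·G, the supremum of F over D equals σ·√(G² − H²) and is attained at γ = 0; otherwise the supremum equals √(C² + σ²)·G − C·H and is attained at γ = (√(C² + σ²)/C)·H − G > 0. -/
/-!
Write `S = √(C² + σ²)` and `x = G + γ`. Cauchy–Schwarz for the vectors `(C, σ)` and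
`(H, √(x² - H²))`, of lengths `S` and `x`, gives `C H + σ √(x² - H²) ≤ S x`, that is
`F γ ≤ S G - C H` for every feasible `γ`, with equality when the vectors are parallel, i.e. when
`x = S H / C`. This `γ = S H / C - G` is positive exactly when `C G < S H`. Otherwise the concave
function `F` is already decreasing at `0`: its right derivative there, `σ G / √(G² - H²) - S`, is
at most `0` because `S² (G² - H²) ≥ S² G² - C² G² = σ² G²`.
-/

/-- The objective `F(γ)` of the LASSO dual as a function of its remaining scalar variable `γ`:
`G` stands for `‖g‖₂`, `H` for `‖h + ν·1 - λ‖₂`, and `C` for the a priori bound `C_w` on the error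
norm. -/
noncomputable def lassoDualObjective (σ C G H γ : ℝ) : ℝ :=
  σ * √((G + γ) ^ 2 - H ^ 2) - γ * √(C ^ 2 + σ ^ 2)

/-- The domain of the dual variable `γ`. The constraint `H ≤ G + γ` keeps the radicand of
`lassoDualObjective` nonnegative when `0 ≤ H`. -/
def lassoDualFeasible (G H : ℝ) : Set ℝ :=
  {γ | 0 ≤ γ ∧ H ≤ G + γ}

/-- The stationary point of `lassoDualObjective`, which is the optimal `γ` in the
non-overwhelming case. -/
noncomputable def lassoDualCriticalPoint (σ C G H : ℝ) : ℝ :=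
  √(C ^ 2 + σ ^ 2) / C * H - G

theorem mul_add_mul_le_sqrt_mul_sqrt (a b c d : ℝ) :
    a * c + b * d ≤ √(a ^ 2 + b ^ 2) * √(c ^ 2 + d ^ 2) := by
  simpa [Fin.sum_univ_two] using Real.sum_mul_le_sqrt_mul_sqrt Finset.univ ![a, b] ![c, d]

theorem le_sqrt_sq_add_sq_left (a b : ℝ) : a ≤ √(a ^ 2 + b ^ 2) :=
  Real.le_sqrt_of_sq_le (le_add_of_nonneg_right (sq_nonneg b))

theorem le_sqrt_sq_add_sq_right (a b : ℝ) : b ≤ √(a ^ 2 + b ^ 2) :=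
  Real.le_sqrt_of_sq_le (le_add_of_nonneg_left (sq_nonneg a))

section

variable {σ C G H γ : ℝ}

theorem mul_add_mul_sqrt_sq_sub_sq_le {x : ℝ} (hx : |H| ≤ x) :
    C * H + σ * √(x ^ 2 - H ^ 2) ≤ √(C ^ 2 + σ ^ 2) * x := by
  have hHx : 0 ≤ x ^ 2 - H ^ 2 := sub_nonneg.2 (sq_le_sq.2 (hx.trans (le_abs_self x)))
  have hlength : √(H ^ 2 + √(x ^ 2 - H ^ 2) ^ 2) = x := by
    rw [Real.sq_sqrt hHx, add_sub_cancel, Real.sqrt_sq ((abs_nonneg H).trans hx)]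
  have hCS := mul_add_mul_le_sqrt_mul_sqrt C σ H √(x ^ 2 - H ^ 2)
  rwa [hlength] at hCS

theorem lassoDualObjective_le (hH : 0 ≤ H) (hγ : H ≤ G + γ) :
    lassoDualObjective σ C G H γ ≤ √(C ^ 2 + σ ^ 2) * G - C * H := by
  have hCS := mul_add_mul_sqrt_sq_sub_sq_le (σ := σ) (C := C) ((abs_of_nonneg hH).trans_le hγ)
  unfold lassoDualObjective
  linarith

theorem lassoDualObjective_criticalPoint (hσ : 0 ≤ σ) (hC : 0 < C) (hH : 0 ≤ H) :
    lassoDualObjective σ C G H (lassoDualCriticalPoint σ C G H) =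
      √(C ^ 2 + σ ^ 2) * G - C * H := by
  have hS : √(C ^ 2 + σ ^ 2) ^ 2 = C ^ 2 + σ ^ 2 := Real.sq_sqrt (by positivity)
  have hradicand : (√(C ^ 2 + σ ^ 2) / C * H) ^ 2 - H ^ 2 = (σ * H / C) ^ 2 := by
    rw [mul_pow, div_pow, hS]
    field_simp
    ring
  rw [lassoDualObjective, lassoDualCriticalPoint, add_sub_cancel, hradicand,
    Real.sqrt_sq (by positivity)]
  field_simp
  linear_combination -H * hS

theorem lassoDualCriticalPoint_pos (hC : 0 < C) (h : C * G < √(C ^ 2 + σ ^ 2) * H) :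
    0 < lassoDualCriticalPoint σ C G H := by
  rwa [lassoDualCriticalPoint, sub_pos, div_mul_eq_mul_div, lt_div_iff₀' hC]

theorem le_add_lassoDualCriticalPoint (hC : 0 < C) (hH : 0 ≤ H) :
    H ≤ G + lassoDualCriticalPoint σ C G H := by
  rw [lassoDualCriticalPoint, add_sub_cancel]
  exact le_mul_of_one_le_left hH ((one_le_div hC).2 (le_sqrt_sq_add_sq_left C σ))

theorem isGreatest_lassoDualObjective_of_lt (hσ : 0 ≤ σ) (hC : 0 < C) (hH : 0 ≤ H)
    (h : C * G < √(C ^ 2 + σ ^ 2) * H) :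
    IsGreatest (lassoDualObjective σ C G H '' lassoDualFeasible G H)
      (√(C ^ 2 + σ ^ 2) * G - C * H) :=
  ⟨⟨lassoDualCriticalPoint σ C G H,
      ⟨(lassoDualCriticalPoint_pos hC h).le, le_add_lassoDualCriticalPoint hC hH⟩,
      lassoDualObjective_criticalPoint hσ hC hH⟩,
    Set.forall_mem_image.2 fun _ hγ => lassoDualObjective_le hH hγ.2⟩

theorem lassoDualObjective_zero : lassoDualObjective σ C G H 0 = σ * √(G ^ 2 - H ^ 2) := by
  simp [lassoDualObjective]

theorem le_of_sqrt_mul_le (hC : 0 < C) (hH : 0 ≤ H) (h : √(C ^ 2 + σ ^ 2) * H ≤ C * G) :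
    H ≤ G :=
  le_of_mul_le_mul_left
    ((mul_le_mul_of_nonneg_right (le_sqrt_sq_add_sq_left C σ) hH).trans h) hC

theorem mul_le_sqrt_mul_sqrt_sq_sub_sq (hH : 0 ≤ H) (h : √(C ^ 2 + σ ^ 2) * H ≤ C * G) :
    σ * G ≤ √(C ^ 2 + σ ^ 2) * √(G ^ 2 - H ^ 2) := by
  have hsq : (C ^ 2 + σ ^ 2) * H ^ 2 ≤ (C * G) ^ 2 := by
    calc (C ^ 2 + σ ^ 2) * H ^ 2 = (√(C ^ 2 + σ ^ 2) * H) ^ 2 := by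
          rw [mul_pow, Real.sq_sqrt (by positivity)]
      _ ≤ (C * G) ^ 2 := pow_le_pow_left₀ (by positivity) h 2
  rw [← Real.sqrt_mul (by positivity)]
  apply Real.le_sqrt_of_sq_le
  linarith

-- Dividing `hslope` by `√(G² - H²)` bounds the derivative of `γ ↦ σ √((G + γ)² - H²)` at `0`
-- by `S`; the form without division also covers `G = H`.
theorem mul_sqrt_add_sq_sub_sq_le {S : ℝ} (hσ : 0 ≤ σ) (hσS : σ ≤ S) (hγ : 0 ≤ γ)
    (hH : 0 ≤ H) (hHG : H ≤ G) (hslope : σ * G ≤ S * √(G ^ 2 - H ^ 2)) :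
    σ * √((G + γ) ^ 2 - H ^ 2) ≤ σ * √(G ^ 2 - H ^ 2) + γ * S := by
  have hr : √(G ^ 2 - H ^ 2) ^ 2 = G ^ 2 - H ^ 2 :=
    Real.sq_sqrt (sub_nonneg.2 (pow_le_pow_left₀ hH hHG 2))
  have ht : √((G + γ) ^ 2 - H ^ 2) ^ 2 = (G + γ) ^ 2 - H ^ 2 :=
    Real.sq_sqrt (sub_nonneg.2 (pow_le_pow_left₀ hH (hHG.trans (le_add_of_nonneg_right hγ)) 2))
  have hS : 0 ≤ S := hσ.trans hσS
  refine le_of_sq_le_sq ?_ (by positivity)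
  calc (σ * √((G + γ) ^ 2 - H ^ 2)) ^ 2
      = σ ^ 2 * (G ^ 2 - H ^ 2) + 2 * (σ * γ) * (σ * G) + γ ^ 2 * σ ^ 2 := by
        rw [mul_pow, ht]
        ring
    _ ≤ σ ^ 2 * (G ^ 2 - H ^ 2) + 2 * (σ * γ) * (S * √(G ^ 2 - H ^ 2)) + γ ^ 2 * S ^ 2 := by
        gcongr
    _ = (σ * √(G ^ 2 - H ^ 2) + γ * S) ^ 2 := by
        linear_combination -σ ^ 2 * hr

theorem isGreatest_lassoDualObjective_of_le (hσ : 0 ≤ σ) (hC : 0 < C) (hH : 0 ≤ H)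
    (h : √(C ^ 2 + σ ^ 2) * H ≤ C * G) :
    IsGreatest (lassoDualObjective σ C G H '' lassoDualFeasible G H) (σ * √(G ^ 2 - H ^ 2)) := by
  have hHG : H ≤ G := le_of_sqrt_mul_le hC hH h
  refine ⟨⟨0, ⟨le_rfl, hHG.trans_eq (add_zero G).symm⟩, lassoDualObjective_zero⟩,
    Set.forall_mem_image.2 fun γ hγ => sub_le_iff_le_add.2 ?_⟩
  exact mul_sqrt_add_sq_sub_sq_le hσ (le_sqrt_sq_add_sq_right C σ) hγ.1 hH hHG
    (mul_le_sqrt_mul_sqrt_sq_sub_sq hH h)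

end

theorem lasso_stmt1 (σ C G H : ℝ) (hσ : 0 < σ) (hC : 0 < C) (hG : 0 < G) (hH : 0 ≤ H) :
    (Real.sqrt (C ^ 2 + σ ^ 2) * H ≤ C * G →
      IsGreatest
        ((fun γ => σ * Real.sqrt ((G + γ) ^ 2 - H ^ 2) - γ * Real.sqrt (C ^ 2 + σ ^ 2)) ''
          {γ : ℝ | 0 ≤ γ ∧ H ≤ G + γ})
        (σ * Real.sqrt (G ^ 2 - H ^ 2)) ∧
      σ * Real.sqrt ((G + 0) ^ 2 - H ^ 2) - 0 * Real.sqrt (C ^ 2 + σ ^ 2)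
        = σ * Real.sqrt (G ^ 2 - H ^ 2)) ∧
    (C * G < Real.sqrt (C ^ 2 + σ ^ 2) * H →
      IsGreatest
        ((fun γ => σ * Real.sqrt ((G + γ) ^ 2 - H ^ 2) - γ * Real.sqrt (C ^ 2 + σ ^ 2)) ''
          {γ : ℝ | 0 ≤ γ ∧ H ≤ G + γ})
        (Real.sqrt (C ^ 2 + σ ^ 2) * G - C * H) ∧
      0 < Real.sqrt (C ^ 2 + σ ^ 2) / C * H - G ∧
      σ * Real.sqrt ((G + (Real.sqrt (C ^ 2 + σ ^ 2) / C * H - G)) ^ 2 - H ^ 2)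
          - (Real.sqrt (C ^ 2 + σ ^ 2) / C * H - G) * Real.sqrt (C ^ 2 + σ ^ 2)
        = Real.sqrt (C ^ 2 + σ ^ 2) * G - C * H) := by
  exact ⟨fun h => ⟨isGreatest_lassoDualObjective_of_le hσ.le hC hH h, lassoDualObjective_zero⟩,
    fun h => ⟨isGreatest_lassoDualObjective_of_lt hσ.le hC hH h, lassoDualCriticalPoint_pos hC h,
      lassoDualObjective_criticalPoint hσ.le hC hH⟩⟩
end

section
/- Fix integers n ≥ 1 and k with 1 ≤ k ≤ n, let x̃ ∈ ℝⁿ be k-sparse nonnegative with x̃ ≠ 0, let σ > 0, C_w > 0, g ∈ ℝᵐ with ‖g‖₂ > 0, and h ∈ ℝⁿ. Suppose ν̂ ≥ 0 and λ̂ ∈ ℝⁿ with 0 ≤ λ̂_i ≤ 2ν̂ for all i attain the supremum defining ξ_ov(σ, g, h, x̃), and suppose √(1 + σ²/C_w²)·‖h + ν̂·1 − λ̂‖₂ ≤ ‖g‖₂. Write Ĥ = ‖h + ν̂·1 − λ̂‖₂. Then ξ(σ, g, h, x̃) = σ·√(‖g‖₂² − Ĥ²) − Σ_{i=n−k+1}^{n}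 λ̂_i·x̃_i, the minimum defining ξ(σ, g, h, x̃) is attained at ŵ = −σ·(h + ν̂·1 − λ̂)/√(‖g‖₂² − Ĥ²), and ‖ŵ‖₂ = σ·Ĥ/√(‖g‖₂² − Ĥ²) ≤ C_w. -/
noncomputable def e2norm {d : ℕ} (x : Fin d → ℝ) : ℝ := Real.sqrt (∑ i, x i ^ 2)

noncomputable def l1norm {d : ℕ} (x : Fin d → ℝ) : ℝ := ∑ i, |x i|

def kSparseNonneg (n k : ℕ) (x : Fin n → ℝ) : Prop :=
  (∀ i : Fin n, (i : ℕ) < n - k → x i = 0) ∧ ∀ i, 0 ≤ x i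

noncomputable def tailSum {n : ℕ} (k : ℕ) (lam x : Fin n → ℝ) : ℝ :=
  ∑ i ∈ Finset.univ.filter (fun i : Fin n => n - k ≤ (i : ℕ)), lam i * x i

/-- The constraint set of the "overwhelming" dual optimization (2.37). -/
def xiOvSet (m n k : ℕ) (σ : ℝ) (xt : Fin n → ℝ) (g : Fin m → ℝ) (h : Fin n → ℝ) :
    Set ℝ :=
  {z : ℝ | ∃ ν : ℝ, ∃ lam : Fin n → ℝ, 0 ≤ ν ∧
    (∀ i, 0 ≤ lam i ∧ lam i ≤ 2 * ν) ∧
    e2norm (fun i => h i + ν - lam i) ≤ e2norm g ∧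
    z = σ * Real.sqrt (e2norm g ^ 2 - e2norm (fun i => h i + ν - lam i) ^ 2)
        - tailSum k lam xt}

/-!
The constraint `‖x + w‖₁ ≤ ‖x‖₁` is the family of linear inequalities `⟪ν 1 - λ, w⟫ ≤ ⟪λ, x⟫`
indexed by the cone of multipliers `0 ≤ λ i ≤ 2 ν`, and `ξ_ov` is the Lagrange dual of the resulting
conic program; weak duality is Cauchy–Schwarz. If the residual `v = h + ν 1 - λ` at a dual maximizer
satisfies `‖v‖ < ‖g‖`, the dual objective is differentiable there, and its derivative along any
segment to another multiplier is nonpositive. Since the multipliers form a cone, this says exactly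
that `w = -σ v / √(‖g‖² - ‖v‖²)` satisfies the inequality of every multiplier, with equality at the
maximizer. So `w` is primal feasible and closes the duality gap, while the bound on `‖w‖` is a
rearrangement of the assumption on `‖v‖`.
-/

open scoped InnerProductSpace

section Real

variable {σ C a b : ℝ}

lemma sq_sub_sq_pos_of_lt (ha : 0 ≤ a) (hab : a < b) : 0 < b ^ 2 - a ^ 2 :=
  sub_pos.2 (pow_lt_pow_left₀ hab ha two_ne_zero)

lemma lt_of_sqrt_one_add_mul_le (hσ : σ ≠ 0) (hC : C ≠ 0) (ha : 0 ≤ a) (hb : 0 < b)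
    (hab : √(1 + σ ^ 2 / C ^ 2) * a ≤ b) : a < b := by
  have one_lt : 1 < √(1 + σ ^ 2 / C ^ 2) :=
    Real.lt_sqrt_of_sq_lt (by rw [one_pow]; exact lt_add_of_pos_right 1 (by positivity))
  rcases ha.eq_or_lt with rfl | ha
  · exact hb
  · exact (lt_mul_of_one_lt_left ha one_lt).trans_le hab

lemma mul_div_sqrt_sq_sub_sq_le_iff (hσ : 0 ≤ σ) (hC : 0 < C) (ha : 0 ≤ a) (hab : a < b) :
    σ * a / √(b ^ 2 - a ^ 2) ≤ C ↔ √(1 + σ ^ 2 / C ^ 2) * a ≤ b := by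
  have pos : 0 < b ^ 2 - a ^ 2 := sq_sub_sq_pos_of_lt ha hab
  have hb : 0 ≤ b := ha.trans hab.le
  rw [div_le_iff₀ (Real.sqrt_pos.2 pos), ← sq_le_sq₀ (by positivity) (by positivity),
    ← sq_le_sq₀ (by positivity) hb, mul_pow C, Real.sq_sqrt pos.le, mul_pow √_,
    Real.sq_sqrt (by positivity), one_add_div (by positivity), div_mul_eq_mul_div,
    div_le_iff₀ (by positivity)]
  constructor <;> intro h <;> linarith

end Real

namespace ConicDuality

variable {E M : Type*} [NormedAddCommGroup E] [InnerProductSpace ℝ E]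
  [AddCommGroup M] [Module ℝ M]

/-- The objective of the primal problem `min {√(‖w‖² + σ²) G + ⟪h, w⟫}`; the number `G` plays the
role of `‖g‖₂`. -/
noncomputable def primalObjective (σ G : ℝ) (h w : E) : ℝ :=
  √(‖w‖ ^ 2 + σ ^ 2) * G + ⟪h, w⟫_ℝ

/-- The feasible set of the primal problem, cut out by one linear inequality for each multiplier
in `K`. -/
def primalFeasible (A : M →ₗ[ℝ] E) (c : M →ₗ[ℝ] ℝ) (K : Set M) : Set E :=
  {w | ∀ p ∈ K, ⟪A p, w⟫_ℝ ≤ c p}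

/-- The Lagrange dual objective: for `0 ≤ σ`, the infimum over all `w` of
`primalObjective σ G h w + ⟪A p, w⟫ - c p`, which is finite only when `‖h + A p‖ ≤ G`. -/
noncomputable def dualObjective (σ G : ℝ) (h : E) (A : M →ₗ[ℝ] E) (c : M →ₗ[ℝ] ℝ) (p : M) : ℝ :=
  σ * √(G ^ 2 - ‖h + A p‖ ^ 2) - c p

/-- The feasible set of the dual problem: the multipliers of `K` at which the Lagrangian is bounded
below. -/
def dualFeasible (G : ℝ) (h : E) (A : M →ₗ[ℝ] E) (K : Set M) : Set M :=
  {p | p ∈ K ∧ ‖h + A p‖ ≤ G}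

/-- The minimizer of `w ↦ primalObjective σ G v w` when `‖v‖ < G` and `0 ≤ σ`; it recovers
the primal solution from the residual `v = h + A p` of a dual one. -/
noncomputable def primalOfResidual (σ G : ℝ) (v : E) : E :=
  -(σ / √(G ^ 2 - ‖v‖ ^ 2)) • v

variable {σ G : ℝ} {h v w : E} {A : M →ₗ[ℝ] E} {c : M →ₗ[ℝ] ℝ} {p q : M}

lemma primalObjective_add_left (σ G : ℝ) (h u w : E) :
    primalObjective σ G (h + u) w = primalObjective σ G h w + ⟪u, w⟫_ℝ := by
  simp only [primalObjective, inner_add_left, add_assoc]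

-- Cauchy–Schwarz twice: in `E`, and for the plane vectors `(σ, ‖w‖)` and `(√(G² - ‖v‖²), ‖v‖)`.
lemma mul_sqrt_le_primalObjective (σ : ℝ) (w : E) (hv : ‖v‖ ≤ G) :
    σ * √(G ^ 2 - ‖v‖ ^ 2) ≤ primalObjective σ G v w := by
  have hG : 0 ≤ G := (norm_nonneg v).trans hv
  have hR : √(G ^ 2 - ‖v‖ ^ 2) ^ 2 = G ^ 2 - ‖v‖ ^ 2 :=
    Real.sq_sqrt (sub_nonneg.2 (pow_le_pow_left₀ (norm_nonneg v) hv 2))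
  have hS : √(‖w‖ ^ 2 + σ ^ 2) ^ 2 = ‖w‖ ^ 2 + σ ^ 2 := Real.sq_sqrt (by positivity)
  have plane : σ * √(G ^ 2 - ‖v‖ ^ 2) + ‖w‖ * ‖v‖ ≤ √(‖w‖ ^ 2 + σ ^ 2) * G := by
    refine le_of_sq_le_sq ?_ (by positivity)
    rw [mul_pow, hS]
    nlinarith [sq_nonneg (‖w‖ * √(G ^ 2 - ‖v‖ ^ 2) - σ * ‖v‖)]
  have space : -(‖v‖ * ‖w‖) ≤ ⟪v, w⟫_ℝ := neg_le_of_abs_le (abs_real_inner_le_norm v w)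
  unfold primalObjective
  linarith

theorem dualObjective_le_primalObjective {K : Set M} (σ : ℝ) (hp : p ∈ dualFeasible G h A K)
    (hw : w ∈ primalFeasible A c K) : dualObjective σ G h A c p ≤ primalObjective σ G h w := by
  have residual := mul_sqrt_le_primalObjective σ w hp.2
  rw [primalObjective_add_left] at residual
  have multiplier := hw p hp.1
  unfold dualObjective
  linarith

lemma norm_primalOfResidual (hσ : 0 ≤ σ) (v : E) :
    ‖primalOfResidual σ G v‖ = σ * ‖v‖ / √(G ^ 2 - ‖v‖ ^ 2) := by
  rw [primalOfResidual, norm_smul, norm_neg, Real.norm_of_nonneg (by positivity),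
    div_mul_eq_mul_div]

lemma primalObjective_primalOfResidual (hσ : 0 ≤ σ) (hv : ‖v‖ < G) :
    primalObjective σ G v (primalOfResidual σ G v) = σ * √(G ^ 2 - ‖v‖ ^ 2) := by
  have hG : 0 ≤ G := (norm_nonneg v).trans hv.le
  have pos : 0 < G ^ 2 - ‖v‖ ^ 2 := sq_sub_sq_pos_of_lt (norm_nonneg v) hv
  have hR : 0 < √(G ^ 2 - ‖v‖ ^ 2) := Real.sqrt_pos.2 pos
  have hR_sq : √(G ^ 2 - ‖v‖ ^ 2) ^ 2 = G ^ 2 - ‖v‖ ^ 2 := Real.sq_sqrt pos.le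
  rw [primalObjective, norm_primalOfResidual hσ, primalOfResidual, real_inner_smul_right,
    real_inner_self_eq_norm_sq]
  set R := √(G ^ 2 - ‖v‖ ^ 2)
  have hypotenuse : (σ * ‖v‖ / R) ^ 2 + σ ^ 2 = (σ * G / R) ^ 2 := by
    field_simp
    linear_combination σ ^ 2 * hR_sq
  rw [hypotenuse, Real.sqrt_sq (by positivity)]
  field_simp
  linear_combination -σ * hR_sq

lemma hasDerivAt_sqrt_sq_sub_norm_sq (hv : ‖v‖ < G) (d : E) :
    HasDerivAt (fun t : ℝ => √(G ^ 2 - ‖v + t • d‖ ^ 2)) (-⟪v, d⟫_ℝ / √(G ^ 2 - ‖v‖ ^ 2)) 0 := by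
  have line : HasDerivAt (fun t : ℝ => v + t • d) d 0 := by
    simpa using ((hasDerivAt_id (0 : ℝ)).smul_const d).const_add v
  have ne_zero := (sq_sub_sq_pos_of_lt (norm_nonneg v) hv).ne'
  convert! (line.norm_sq.const_sub (G ^ 2)).sqrt (by simpa using ne_zero) using 1
  simp only [zero_smul, add_zero]
  ring

theorem inner_sub_primalOfResidual_le {K : Set M} (hK : Convex ℝ K) (hp : p ∈ K)
    (hlt : ‖h + A p‖ < G)
    (hmax : IsMaxOn (dualObjective σ G h A c) (dualFeasible G h A K) p) (hq : q ∈ K) :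
    ⟪A (q - p), primalOfResidual σ G (h + A p)⟫_ℝ ≤ c (q - p) := by
  set v := h + A p with hv
  have residual (t : ℝ) : h + A (p + t • (q - p)) = v + t • A (q - p) := by
    rw [map_add, map_smul, hv, add_assoc]
  have hderiv : HasDerivAt (fun t : ℝ => dualObjective σ G h A c (p + t • (q - p)))
      (σ * (-⟪v, A (q - p)⟫_ℝ / √(G ^ 2 - ‖v‖ ^ 2)) - c (q - p)) 0 := by
    simp only [dualObjective, residual, map_add c, map_smul c, smul_eq_mul]
    simpa using ((hasDerivAt_sqrt_sq_sub_norm_sq hlt _).const_mul σ).fun_sub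
      (((hasDerivAt_id (0 : ℝ)).mul_const (c (q - p))).const_add (c p))
  have hlocal : IsLocalMaxOn (fun t : ℝ => dualObjective σ G h A c (p + t • (q - p)))
      (Set.Icc 0 1) 0 := by
    have hcont : Continuous fun t : ℝ => ‖v + t • A (q - p)‖ := by fun_prop
    have hnear : ∀ᶠ t : ℝ in nhds 0, ‖v + t • A (q - p)‖ < G :=
      hcont.continuousAt.eventually_lt_const (by simpa using hlt)
    filter_upwards [nhdsWithin_le_nhds hnear, self_mem_nhdsWithin] with t ht ht01
    simpa using hmax ⟨hK.add_smul_sub_mem hp hq ht01, (residual t).symm ▸ ht.le⟩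
  have slope := hlocal.hasFDerivWithinAt_nonpos hderiv.hasFDerivAt.hasFDerivWithinAt
    (mem_posTangentConeAt_of_segment_subset (y := 1) (by simp [segment_eq_Icc]))
  simp only [ContinuousLinearMap.toSpanSingleton_apply, one_smul] at slope
  rw [primalOfResidual, real_inner_smul_right, real_inner_comm]
  calc -(σ / √(G ^ 2 - ‖v‖ ^ 2)) * ⟪v, A (q - p)⟫_ℝ
      = σ * (-⟪v, A (q - p)⟫_ℝ / √(G ^ 2 - ‖v‖ ^ 2)) := by ring
    _ ≤ c (q - p) := sub_nonpos.1 slope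

section Cone

variable {K : ConvexCone ℝ M}

theorem primalOfResidual_mem_primalFeasible (hp : p ∈ K) (hlt : ‖h + A p‖ < G)
    (hmax : IsMaxOn (dualObjective σ G h A c) (dualFeasible G h A K) p) :
    primalOfResidual σ G (h + A p) ∈ primalFeasible A c K := by
  intro q hq
  simpa using inner_sub_primalOfResidual_le K.convex hp hlt hmax (K.add_mem hq hp)

theorem inner_primalOfResidual_eq (hp : p ∈ K) (hlt : ‖h + A p‖ < G)
    (hmax : IsMaxOn (dualObjective σ G h A c) (dualFeasible G h A K) p) :
    ⟪A p, primalOfResidual σ G (h + A p)⟫_ℝ = c p := by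
  refine le_antisymm (primalOfResidual_mem_primalFeasible hp hlt hmax p hp) ?_
  have shrink := inner_sub_primalOfResidual_le K.convex hp hlt hmax
    (K.smul_mem (by norm_num : (0 : ℝ) < 1 / 2) hp)
  simp only [map_sub, map_smul, inner_sub_left, real_inner_smul_left, smul_eq_mul] at shrink
  linarith

theorem primalObjective_primalOfResidual_eq_dualObjective (hσ : 0 ≤ σ) (hp : p ∈ K)
    (hlt : ‖h + A p‖ < G)
    (hmax : IsMaxOn (dualObjective σ G h A c) (dualFeasible G h A K) p) :
    primalObjective σ G h (primalOfResidual σ G (h + A p)) = dualObjective σ G h A c p := by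
  have value := primalObjective_primalOfResidual hσ hlt
  rw [primalObjective_add_left, inner_primalOfResidual_eq hp hlt hmax] at value
  exact eq_sub_of_add_eq value

theorem isMinOn_primalObjective_primalOfResidual (hσ : 0 ≤ σ) (hp : p ∈ K)
    (hlt : ‖h + A p‖ < G)
    (hmax : IsMaxOn (dualObjective σ G h A c) (dualFeasible G h A K) p) :
    IsMinOn (primalObjective σ G h) (primalFeasible A c K) (primalOfResidual σ G (h + A p)) :=
  fun _ hw => (primalObjective_primalOfResidual_eq_dualObjective hσ hp hlt hmax).trans_le
    (dualObjective_le_primalObjective σ ⟨hp, hlt.le⟩ hw)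

end Cone

end ConicDuality

open ConicDuality

/-- The multipliers `(ν, λ)` of the constraint `‖x + w‖₁ ≤ ‖x‖₁`: those with `0 ≤ λ i ≤ 2 ν`, or
equivalently `|ν - λ i| ≤ ν`. -/
def boxCone (ι : Type*) : ConvexCone ℝ (ℝ × (ι → ℝ)) where
  carrier := {p | 0 ≤ p.1 ∧ ∀ i, 0 ≤ p.2 i ∧ p.2 i ≤ 2 * p.1}
  smul_mem' := fun t ht p hp => ⟨mul_nonneg ht.le hp.1, fun i =>
    ⟨mul_nonneg ht.le (hp.2 i).1, by
      simpa [mul_left_comm] using mul_le_mul_of_nonneg_left (hp.2 i).2 ht.le⟩⟩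
  add_mem' := fun p hp q hq => ⟨add_nonneg hp.1 hq.1, fun i =>
    ⟨add_nonneg (hp.2 i).1 (hq.2 i).1, by
      simpa [mul_add] using add_le_add (hp.2 i).2 (hq.2 i).2⟩⟩

/-- The vector `ν 1 - λ` by which the multiplier `(ν, λ)` shifts `h` in the dual objective. -/
def boxShift (ι : Type*) : ℝ × (ι → ℝ) →ₗ[ℝ] EuclideanSpace ℝ ι where
  toFun p := WithLp.toLp 2 fun i => p.1 - p.2 i
  map_add' p q := by
    ext i
    simp only [Prod.fst_add, Prod.snd_add, Pi.add_apply, PiLp.add_apply]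
    ring
  map_smul' t p := by
    ext i
    simp [mul_sub]

/-- The penalty `∑ i, λ i * x i` of the multiplier `(ν, λ)` in the dual objective. -/
def boxPenalty {ι : Type*} [Fintype ι] (x : ι → ℝ) : ℝ × (ι → ℝ) →ₗ[ℝ] ℝ :=
  Fintype.linearCombination ℝ x ∘ₗ LinearMap.snd ℝ ℝ (ι → ℝ)

section L1

variable {n k : ℕ} {ρ : ℝ} {x y w : Fin n → ℝ}

lemma e2norm_eq_norm_toLp (x : Fin n → ℝ) : e2norm x = ‖WithLp.toLp 2 x‖ := by
  simp [e2norm, EuclideanSpace.norm_eq]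

lemma e2norm_nonneg (x : Fin n → ℝ) : 0 ≤ e2norm x :=
  Real.sqrt_nonneg _

lemma tailSum_eq_boxPenalty (hx : kSparseNonneg n k x) (ν : ℝ) (lam : Fin n → ℝ) :
    tailSum k lam x = boxPenalty x (ν, lam) := by
  refine Finset.sum_subset (Finset.subset_univ _) fun i _ hi => ?_
  have head : (i : ℕ) < n - k :=
    not_le.1 fun hle => hi (Finset.mem_filter.2 ⟨Finset.mem_univ i, hle⟩)
  rw [hx.1 i head, mul_zero]

lemma sum_sub_mul_le_mul_l1norm {p : ℝ × (Fin n → ℝ)} (hp : p ∈ boxCone (Fin n))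
    (y : Fin n → ℝ) : ∑ i, (p.1 - p.2 i) * y i ≤ p.1 * l1norm y := by
  rw [l1norm, Finset.mul_sum]
  refine Finset.sum_le_sum fun i _ => (le_abs_self _).trans ?_
  rw [abs_mul]
  obtain ⟨lower, upper⟩ := hp.2 i
  gcongr
  exact abs_le.2 ⟨by linarith, by linarith⟩

lemma exists_mem_boxCone_sum_sub_mul_eq_l1norm (y : Fin n → ℝ) :
    ∃ lam, ((1 : ℝ), lam) ∈ boxCone (Fin n) ∧ ∑ i, (1 - lam i) * y i = l1norm y := by
  refine ⟨fun i => if 0 ≤ y i then 0 else 2, ⟨zero_le_one, fun i => ?_⟩,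
    Finset.sum_congr rfl fun i _ => ?_⟩
  · dsimp only
    split_ifs <;> norm_num
  · dsimp only
    split_ifs with hy
    · rw [sub_zero, one_mul, abs_of_nonneg hy]
    · rw [abs_of_neg (not_le.1 hy)]
      ring

theorem l1norm_le_iff_forall_mem_boxCone :
    l1norm y ≤ ρ ↔ ∀ p ∈ boxCone (Fin n), ∑ i, (p.1 - p.2 i) * y i ≤ p.1 * ρ := by
  refine ⟨fun hy p hp => (sum_sub_mul_le_mul_l1norm hp y).trans
    (mul_le_mul_of_nonneg_left hy hp.1), fun hy => ?_⟩
  obtain ⟨lam, hlam, hsum⟩ := exists_mem_boxCone_sum_sub_mul_eq_l1norm y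
  simpa only [hsum, one_mul] using hy _ hlam

lemma inner_boxShift_sub_boxPenalty (p : ℝ × (Fin n → ℝ)) (x w : Fin n → ℝ) :
    ⟪boxShift (Fin n) p, WithLp.toLp 2 w⟫_ℝ - boxPenalty x p =
      ∑ i, (p.1 - p.2 i) * (x + w) i - p.1 * ∑ i, x i := by
  simp only [boxShift, boxPenalty, LinearMap.coe_mk, AddHom.coe_mk, EuclideanSpace.inner_toLp_toLp,
    dotProduct, star_trivial, LinearMap.comp_apply, LinearMap.snd_apply,
    Fintype.linearCombination_apply, smul_eq_mul, Finset.mul_sum, ← Finset.sum_sub_distrib,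
    Pi.add_apply]
  exact Finset.sum_congr rfl fun i _ => by ring

theorem toLp_mem_primalFeasible_iff (hx : ∀ i, 0 ≤ x i) :
    WithLp.toLp 2 w ∈
        primalFeasible (boxShift (Fin n)) (boxPenalty x) (boxCone (Fin n)) ↔
      l1norm (x + w) ≤ l1norm x := by
  have hx_norm : l1norm x = ∑ i, x i := Finset.sum_congr rfl fun i _ => abs_of_nonneg (hx i)
  rw [l1norm_le_iff_forall_mem_boxCone, hx_norm]
  refine forall₂_congr fun p _ => ?_
  rw [← sub_nonpos, inner_boxShift_sub_boxPenalty, sub_nonpos]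

lemma toLp_add_boxShift (h : Fin n → ℝ) (ν : ℝ) (lam : Fin n → ℝ) :
    WithLp.toLp 2 h + boxShift (Fin n) (ν, lam) = WithLp.toLp 2 fun i => h i + ν - lam i := by
  ext i
  simp [boxShift, add_sub_assoc]

lemma primalObjective_toLp {m : ℕ} (σ : ℝ) (g : Fin m → ℝ) (h w : Fin n → ℝ) :
    primalObjective σ (e2norm g) (WithLp.toLp 2 h) (WithLp.toLp 2 w) =
      √(e2norm w ^ 2 + σ ^ 2) * e2norm g + ∑ i, h i * w i := by
  simp [primalObjective, e2norm_eq_norm_toLp w, EuclideanSpace.inner_toLp_toLp,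
    dotProduct, mul_comm]

lemma dualObjective_toLp {m : ℕ} (hx : kSparseNonneg n k x) (σ : ℝ) (g : Fin m → ℝ)
    (h : Fin n → ℝ) (ν : ℝ) (lam : Fin n → ℝ) :
    dualObjective σ (e2norm g) (WithLp.toLp 2 h) (boxShift (Fin n)) (boxPenalty x)
        (ν, lam) =
      σ * √(e2norm g ^ 2 - e2norm (fun i => h i + ν - lam i) ^ 2) - tailSum k lam x := by
  rw [dualObjective, toLp_add_boxShift, ← e2norm_eq_norm_toLp,
    tailSum_eq_boxPenalty hx ν]

lemma primalOfResidual_toLp (σ G : ℝ) (v : Fin n → ℝ) :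
    primalOfResidual σ G (WithLp.toLp 2 v) =
      WithLp.toLp 2 fun i => -(σ * v i) / √(G ^ 2 - e2norm v ^ 2) := by
  ext i
  simp [primalOfResidual, e2norm_eq_norm_toLp v]
  ring

theorem xiOvSet_eq_image_dualFeasible {m : ℕ} (hx : kSparseNonneg n k x) (σ : ℝ) (g : Fin m → ℝ)
    (h : Fin n → ℝ) :
    xiOvSet m n k σ x g h =
      dualObjective σ (e2norm g) (WithLp.toLp 2 h) (boxShift (Fin n))
          (boxPenalty x) ''
        dualFeasible (e2norm g) (WithLp.toLp 2 h) (boxShift (Fin n))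
          (boxCone (Fin n)) := by
  ext z
  constructor
  · rintro ⟨ν, lam, hν, hlam, hle, rfl⟩
    refine ⟨(ν, lam), ⟨⟨hν, hlam⟩, ?_⟩, dualObjective_toLp hx σ g h ν lam⟩
    rwa [toLp_add_boxShift, ← e2norm_eq_norm_toLp]
  · rintro ⟨⟨ν, lam⟩, ⟨hmem, hle⟩, rfl⟩
    rw [toLp_add_boxShift, ← e2norm_eq_norm_toLp] at hle
    exact ⟨ν, lam, hmem.1, hmem.2, hle, dualObjective_toLp hx σ g h ν lam⟩

theorem isMaxOn_dualObjective_of_isGreatest_xiOvSet {m : ℕ} (hx : kSparseNonneg n k x) {σ ν : ℝ}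
    {g : Fin m → ℝ} {h lam : Fin n → ℝ}
    (hmax : IsGreatest (xiOvSet m n k σ x g h)
      (σ * √(e2norm g ^ 2 - e2norm (fun i => h i + ν - lam i) ^ 2) - tailSum k lam x)) :
    IsMaxOn (dualObjective σ (e2norm g) (WithLp.toLp 2 h) (boxShift (Fin n)) (boxPenalty x))
      (dualFeasible (e2norm g) (WithLp.toLp 2 h) (boxShift (Fin n)) (boxCone (Fin n)))
      (ν, lam) := by
  rw [xiOvSet_eq_image_dualFeasible hx] at hmax
  intro q hq
  exact (hmax.2 ⟨q, hq, rfl⟩).trans_eq (dualObjective_toLp hx σ g h ν lam).symm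

end L1

theorem lasso_stmt4 (m n k : ℕ) (hn : 1 ≤ n) (hk1 : 1 ≤ k) (hkn : k ≤ n)
    (xt : Fin n → ℝ) (hxt : kSparseNonneg n k xt) (hxt0 : xt ≠ 0)
    (σ Cw : ℝ) (hσ : 0 < σ) (hCw : 0 < Cw)
    (g : Fin m → ℝ) (hg : 0 < e2norm g) (h : Fin n → ℝ)
    (νh : ℝ) (lamh : Fin n → ℝ)
    (hνh : 0 ≤ νh) (hlamh : ∀ i, 0 ≤ lamh i ∧ lamh i ≤ 2 * νh)
    (hmax : IsGreatest (xiOvSet m n k σ xt g h)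
      (σ * Real.sqrt (e2norm g ^ 2 - e2norm (fun i => h i + νh - lamh i) ^ 2)
        - tailSum k lamh xt))
    (hcond : Real.sqrt (1 + σ ^ 2 / Cw ^ 2) * e2norm (fun i => h i + νh - lamh i)
      ≤ e2norm g) :
    (sInf ((fun w : Fin n → ℝ =>
        Real.sqrt (e2norm w ^ 2 + σ ^ 2) * e2norm g + ∑ i, h i * w i) ''
      {w : Fin n → ℝ | e2norm w ≤ Cw ∧ l1norm (xt + w) ≤ l1norm xt})
      = σ * Real.sqrt (e2norm g ^ 2 - e2norm (fun i => h i + νh - lamh i) ^ 2)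
        - tailSum k lamh xt) ∧
    (e2norm (fun i => -(σ * (h i + νh - lamh i)) /
        Real.sqrt (e2norm g ^ 2 - e2norm (fun i => h i + νh - lamh i) ^ 2)) ≤ Cw ∧
      l1norm (xt + fun i => -(σ * (h i + νh - lamh i)) /
        Real.sqrt (e2norm g ^ 2 - e2norm (fun i => h i + νh - lamh i) ^ 2))
        ≤ l1norm xt) ∧
    (Real.sqrt (e2norm (fun i => -(σ * (h i + νh - lamh i)) /
          Real.sqrt (e2norm g ^ 2 - e2norm (fun i => h i + νh - lamh i) ^ 2)) ^ 2
          + σ ^ 2) * e2norm g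
      + ∑ i, h i * (-(σ * (h i + νh - lamh i)) /
          Real.sqrt (e2norm g ^ 2 - e2norm (fun i => h i + νh - lamh i) ^ 2))
      = σ * Real.sqrt (e2norm g ^ 2 - e2norm (fun i => h i + νh - lamh i) ^ 2)
        - tailSum k lamh xt) ∧
    (e2norm (fun i => -(σ * (h i + νh - lamh i)) /
        Real.sqrt (e2norm g ^ 2 - e2norm (fun i => h i + νh - lamh i) ^ 2))
      = σ * e2norm (fun i => h i + νh - lamh i) /
        Real.sqrt (e2norm g ^ 2 - e2norm (fun i => h i + νh - lamh i) ^ 2)) := by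
  have hlt := lt_of_sqrt_one_add_mul_le hσ.ne' hCw.ne' (e2norm_nonneg _) hg hcond
  have hbound := (mul_div_sqrt_sq_sub_sq_le_iff hσ.le hCw (e2norm_nonneg _) hlt).2 hcond
  have hp : (νh, lamh) ∈ boxCone (Fin n) := ⟨hνh, hlamh⟩
  have hdual := isMaxOn_dualObjective_of_isGreatest_xiOvSet hxt hmax
  have hres := toLp_add_boxShift h νh lamh
  rw [e2norm_eq_norm_toLp fun i => h i + νh - lamh i, ← hres] at hlt
  have hfeas := primalOfResidual_mem_primalFeasible hp hlt hdual
  have hval := primalObjective_primalOfResidual_eq_dualObjective hσ.le hp hlt hdual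
  have hmin := isMinOn_primalObjective_primalOfResidual hσ.le hp hlt hdual
  have hnorm := norm_primalOfResidual (G := e2norm g) hσ.le
    (WithLp.toLp 2 fun i => h i + νh - lamh i)
  rw [hres, primalOfResidual_toLp] at hfeas hval hmin
  rw [toLp_mem_primalFeasible_iff hxt.2] at hfeas
  rw [primalObjective_toLp, dualObjective_toLp hxt] at hval
  rw [primalOfResidual_toLp, ← e2norm_eq_norm_toLp, ← e2norm_eq_norm_toLp] at hnorm
  refine ⟨IsLeast.csInf_eq ⟨⟨_, ⟨hnorm.trans_le hbound, hfeas⟩, hval⟩, ?_⟩,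
    ⟨hnorm.trans_le hbound, hfeas⟩, hval, hnorm⟩
  rintro _ ⟨w, ⟨_, hw⟩, rfl⟩
  have hle := isMinOn_iff.1 hmin _ ((toLp_mem_primalFeasible_iff hxt.2).2 hw)
  rwa [primalObjective_toLp, primalObjective_toLp, hval] at hle
end

section
/- Fix integers n ≥ 1 and k with 1 ≤ k ≤ n, let x̃ ∈ ℝⁿ be k-sparse nonnegative with x̃_j > 0 for some j, let σ > 0, C_w > 0, g ∈ ℝᵐ and h ∈ ℝⁿ. Define the signed feasible set S_w⁺(σ, x̃, C_w) = {w ∈ ℝⁿ : ‖w‖₂ ≤ C_w, Σ_{i=1}^{n} w_i ≤ 0, and x̃_i + w_i ≥ 0 for all i} and ξ₊(σ, g, h, x̃) = min_{w ∈ S_w⁺(σ, x̃, C_w)} ( √(‖w‖₂² + σ²)·‖g‖₂ + ⟨h, w⟩ ). Then strong Lagrange duality holds: ξ₊(σ, g, h, x̃) = sup { σ·√((‖g‖₂ + γ)² − ‖h + ν·1 − λ‖₂²) − Σ_{i=n−k+1}^{n} λ_i·x̃_i − γ·√(C_w² + σ²) : ν ≥ 0, λ ∈ ℝⁿ with λ_i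 ≥ 0 for all i, γ ≥ 0, and ‖g‖₂ + γ ≥ ‖h + ν·1 − λ‖₂ }. -/
/-!
Minimising `√(‖w‖² + σ²) a + ⟪h, w⟫` over a ball cut by finitely many half-spaces is a convex
programme with compact feasible set. If `p` lies strictly below its value, then by compactness the
programme with all constraints loosened by some `ε > 0` still has value at least `p`. Feasible
points become Slater points of the loosened programme, so a separation argument gives multipliers
whose Lagrangian is at least `p` everywhere. With the ball written as `√(‖w‖² + σ²) ≤ √(C² + σ²)`,
the Lagrangian is `√(‖w‖² + σ²) (a + γ) + ⟪c, w⟫` up to a constant, and its infimum over `w` is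
`σ √((a + γ)² - ‖c‖²)` if `‖c‖ ≤ a + γ`, and `-∞` otherwise. The signed LASSO is the case of the
half-spaces `∑ wᵢ ≤ 0` and `-wᵢ ≤ xᵢ`.
-/

open Set Filter Topology

open scoped RealInnerProductSpace

section Multipliers

variable {V ι : Type*}

/-- The set of vectors lying strictly above a value of `F` on `s`, for the coordinatewise order:
the convex set that is separated from a point to produce multipliers. -/
def strictUpperImage (s : Set V) (F : ι → V → ℝ) : Set (ι → ℝ) :=
  {q | ∃ w ∈ s, ∀ i, F i w < q i}

theorem isOpen_strictUpperImage [Finite ι] (s : Set V) (F : ι → V → ℝ) :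
    IsOpen (strictUpperImage s F) := by
  have hunion : strictUpperImage s F = ⋃ w ∈ s, ⋂ i, {q : ι → ℝ | F i w < q i} := by
    ext q
    simp only [strictUpperImage, mem_ofPred_eq, mem_iUnion, mem_iInter, exists_prop]
  rw [hunion]
  exact isOpen_biUnion fun w _ => isOpen_iInter_of_finite fun i =>
    isOpen_lt continuous_const (continuous_apply i)

theorem mem_closure_strictUpperImage {s : Set V} {F : ι → V → ℝ} {w : V} (hw : w ∈ s)
    {q : ι → ℝ} (hq : ∀ i, F i w ≤ q i) : q ∈ closure (strictUpperImage s F) := by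
  have hlim : Tendsto (fun (ε : ℝ) i => q i + ε) (𝓝[>] 0) (𝓝 q) := by
    have hcont : Continuous fun (ε : ℝ) i => q i + ε := by fun_prop
    simpa using (hcont.tendsto 0).mono_left nhdsWithin_le_nhds
  refine mem_closure_of_tendsto hlim ?_
  filter_upwards [self_mem_nhdsWithin] with ε hε
  exact ⟨w, hw, fun i => (hq i).trans_lt (lt_add_of_pos_right _ hε)⟩

theorem nonneg_of_forall_nonneg_add_mul {𝕜 : Type*} [Field 𝕜] [LinearOrder 𝕜]
    [IsStrictOrderedRing 𝕜] [Archimedean 𝕜] {b m : 𝕜} (H : ∀ t : 𝕜, 0 ≤ t → 0 ≤ b + t * m) :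
    0 ≤ m := by
  by_contra! hm
  obtain ⟨t, ht⟩ := exists_nat_gt (b / -m)
  have := H t t.cast_nonneg
  rw [div_lt_iff₀ (neg_pos.mpr hm)] at ht
  linarith

theorem exists_pos_forall_exists_le_of_isCompact {X : Type*} [TopologicalSpace X] [Finite ι]
    [Nonempty ι] {K : Set X} (hK : IsCompact K) {F : ι → X → ℝ}
    (hF : ∀ i, ContinuousOn (F i) K) (hpos : ∀ x ∈ K, ∃ i, 0 < F i x) :
    ∃ ε > 0, ∀ x ∈ K, ∃ i, ε ≤ F i x := by
  have := Fintype.ofFinite ι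
  have hsup : ContinuousOn (fun x => Finset.univ.sup' Finset.univ_nonempty fun i => F i x) K :=
    ContinuousOn.finset_sup'_apply _ fun i _ => hF i
  obtain ⟨ε, hε, hle⟩ := hK.exists_forall_le' hsup (a := 0) fun x hx => by simpa using hpos x hx
  exact ⟨ε, hε, fun x hx => by simpa using hle x hx⟩

theorem exists_pos_forall_relaxed_le [TopologicalSpace V] [Finite ι] {f : V → ℝ} {φ : ι → V → ℝ}
    (hf : Continuous f) (hφ : ∀ i, Continuous (φ i)) {δ : ℝ} (hδ : 0 < δ)
    (hK : IsCompact {w | ∀ i, φ i w ≤ δ}) {p : ℝ} (hp : ∀ w, (∀ i, φ i w ≤ 0) → p < f w) :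
    ∃ ε > 0, ∀ w, (∀ i, φ i w < ε) → p ≤ f w := by
  let F : Option ι → V → ℝ := fun o => o.elim (fun w => f w - p) φ
  have hF : ∀ o, Continuous (F o) := Option.forall.mpr ⟨hf.sub continuous_const, hφ⟩
  obtain ⟨ε, hε, hK_le⟩ := exists_pos_forall_exists_le_of_isCompact hK
    (fun o => (hF o).continuousOn) fun w _ => by
      by_contra! hneg
      exact (sub_nonpos.mp (hneg none)).not_gt (hp w fun i => hneg (some i))
  refine ⟨min ε δ, lt_min hε hδ, fun w hw => ?_⟩
  obtain ⟨_ | i, ho⟩ := hK_le w fun i => (hw i).le.trans (min_le_right ε δ)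
  · exact sub_nonneg.mp (hε.le.trans ho)
  · exact absurd ho ((hw i).trans_le (min_le_left ε δ)).not_ge

variable [AddCommGroup V] [Module ℝ V]

theorem convex_strictUpperImage {s : Set V} {F : ι → V → ℝ} (hs : Convex ℝ s)
    (hF : ∀ i, ConvexOn ℝ s (F i)) : Convex ℝ (strictUpperImage s F) := by
  rintro q ⟨w, hw, hq⟩ q' ⟨w', hw', hq'⟩ a b ha hb hab
  refine ⟨a • w + b • w', hs hw hw' ha hb hab, fun i => ?_⟩
  exact ((hF i).convex_strict_epigraph (x := (w, q i)) (y := (w', q' i))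
    ⟨hw, hq i⟩ ⟨hw', hq' i⟩ ha hb hab).2

-- The theorem of the alternative of Fan, Glicksberg and Hoffman.
theorem exists_nonneg_weights_sum_nonneg [Fintype ι] {s : Set V} {F : ι → V → ℝ}
    (hconv : Convex ℝ s) (hs : s.Nonempty) (hF : ∀ i, ConvexOn ℝ s (F i))
    (hex : ∀ w ∈ s, ∃ i, 0 ≤ F i w) :
    ∃ μ : ι → ℝ, 0 ≤ μ ∧ μ ≠ 0 ∧ ∀ w ∈ s, 0 ≤ ∑ i, μ i * F i w := by
  classical
  have hzero : (0 : ι → ℝ) ∉ strictUpperImage s F := by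
    rintro ⟨w, hw, hneg⟩
    obtain ⟨i, hi⟩ := hex w hw
    exact hi.not_gt (hneg i)
  obtain ⟨L, hL⟩ := geometric_hahn_banach_point_open (convex_strictUpperImage hconv hF)
    (isOpen_strictUpperImage s F) hzero
  simp only [map_zero] at hL
  have hL_closure : ∀ q ∈ closure (strictUpperImage s F), 0 ≤ L q := fun q hq =>
    closure_minimal (fun q hq => (hL q hq).le) (isClosed_le continuous_const L.continuous) hq
  have hL_sum : ∀ q, L q = ∑ i, L (Pi.single i 1) * q i := fun q => by
    conv_lhs => rw [pi_eq_sum_univ' q]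
    simp only [map_sum, map_smul, smul_eq_mul]
    exact Finset.sum_congr rfl fun i _ => mul_comm _ _
  obtain ⟨w₀, hw₀⟩ := hs
  refine ⟨fun i => L (Pi.single i 1), fun i => ?_, fun hμ => ?_, fun w hw => ?_⟩
  · refine nonneg_of_forall_nonneg_add_mul (b := L fun j => F j w₀) fun t ht => ?_
    have hunit : (0 : ι → ℝ) ≤ Pi.single i 1 := Pi.single_nonneg.mpr zero_le_one
    have hmem : (fun j => F j w₀) + t • Pi.single i 1 ∈ closure (strictUpperImage s F) :=
      mem_closure_strictUpperImage hw₀ fun j => le_add_of_nonneg_right (mul_nonneg ht (hunit j))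
    simpa only [map_add, map_smul, smul_eq_mul] using hL_closure _ hmem
  · have hpos := hL (fun i => F i w₀ + 1) ⟨w₀, hw₀, fun i => lt_add_one _⟩
    have hμ_apply : ∀ i, L (Pi.single i 1) = 0 := congrFun hμ
    rw [hL_sum] at hpos
    simp only [hμ_apply, zero_mul, Finset.sum_const_zero, lt_irrefl] at hpos
  · exact (hL_closure _ (mem_closure_strictUpperImage hw fun i => le_rfl)).trans_eq (hL_sum _)

theorem exists_lagrange_multipliers_of_slater [Fintype ι] {s : Set V} {f : V → ℝ}
    {φ : ι → V → ℝ} (hf : ConvexOn ℝ s f) (hφ : ∀ i, ConvexOn ℝ s (φ i)) {w₀ : V} (hw₀ : w₀ ∈ s)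
    (hslater : ∀ i, φ i w₀ < 0) {p : ℝ} (hp : ∀ w ∈ s, (∀ i, φ i w < 0) → p ≤ f w) :
    ∃ μ : ι → ℝ, 0 ≤ μ ∧ ∀ w ∈ s, p ≤ f w + ∑ i, μ i * φ i w := by
  let F : Option ι → V → ℝ := fun o => o.elim (fun w => f w - p) φ
  have hF : ∀ o, ConvexOn ℝ s (F o) := Option.forall.mpr ⟨hf.sub (concaveOn_const p hf.1), hφ⟩
  obtain ⟨μ, hμ, hμ_ne, hsum⟩ := exists_nonneg_weights_sum_nonneg hf.1 ⟨w₀, hw₀⟩ hF fun w hw => by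
    by_contra! hneg
    exact (sub_neg.mp (hneg none)).not_ge (hp w hw fun i => hneg (some i))
  have hsum' : ∀ w ∈ s, 0 ≤ μ none * (f w - p) + ∑ i, μ (some i) * φ i w := fun w hw => by
    simpa only [Fintype.sum_option, F, Option.elim] using hsum w hw
  have hμ_none : 0 < μ none := by
    refine (hμ none).lt_of_ne' fun (h0 : μ none = 0) => ?_
    obtain ⟨_ | i, hi⟩ := Function.ne_iff.mp hμ_ne
    · exact hi h0
    · have hneg : ∑ i, μ (some i) * φ i w₀ < 0 := Finset.sum_neg'
        (fun j _ => mul_nonpos_of_nonneg_of_nonpos (hμ _) (hslater j).le)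
        ⟨i, Finset.mem_univ i, mul_neg_of_pos_of_neg ((hμ _).lt_of_ne' hi) (hslater i)⟩
      have := hsum' w₀ hw₀
      rw [h0, zero_mul, zero_add] at this
      exact this.not_gt hneg
  refine ⟨fun i => μ (some i) / μ none, fun i => div_nonneg (hμ _) (hμ _), fun w hw => ?_⟩
  have hscale : ∑ i, μ (some i) / μ none * φ i w = (∑ i, μ (some i) * φ i w) / μ none := by
    simp only [Finset.sum_div, div_mul_eq_mul_div]
  rw [hscale, ← sub_le_iff_le_add', le_div_iff₀ hμ_none]
  linarith [hsum' w hw]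

theorem exists_lagrange_multipliers_of_isCompact [TopologicalSpace V] [Fintype ι] {f : V → ℝ}
    {φ : ι → V → ℝ} (hf : ConvexOn ℝ univ f) (hφ : ∀ i, ConvexOn ℝ univ (φ i))
    (hf_cont : Continuous f) (hφ_cont : ∀ i, Continuous (φ i)) {δ : ℝ} (hδ : 0 < δ)
    (hK : IsCompact {w | ∀ i, φ i w ≤ δ}) {w₀ : V} (hw₀ : ∀ i, φ i w₀ ≤ 0) {p : ℝ}
    (hp : ∀ w, (∀ i, φ i w ≤ 0) → p < f w) :
    ∃ μ : ι → ℝ, 0 ≤ μ ∧ ∀ w, p ≤ f w + ∑ i, μ i * φ i w := by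
  obtain ⟨ε, hε, hrelaxed⟩ := exists_pos_forall_relaxed_le hf_cont hφ_cont hδ hK hp
  obtain ⟨μ, hμ, hlag⟩ := exists_lagrange_multipliers_of_slater hf
    (fun i => (hφ i).sub (concaveOn_const ε convex_univ)) (mem_univ w₀)
    (fun i => sub_neg.mpr ((hw₀ i).trans_lt hε))
    fun w _ hw => hrelaxed w fun i => sub_neg.mp (hw i)
  refine ⟨μ, hμ, fun w => (hlag w (mem_univ w)).trans ?_⟩
  gcongr with i
  · exact hμ i
  · exact sub_le_self _ hε.le

end Multipliers

section Conjugate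

theorem convexOn_sqrt_norm_sq_add_sq {E : Type*} [SeminormedAddCommGroup E] [NormedSpace ℝ E]
    (σ : ℝ) : ConvexOn ℝ univ fun w : E => √(‖w‖ ^ 2 + σ ^ 2) := by
  let A : E →ᵃ[ℝ] WithLp 2 (E × ℝ) :=
    (WithLp.linearEquiv 2 ℝ (E × ℝ)).symm.toLinearMap.toAffineMap.comp
      ((AffineMap.id ℝ E).prod (AffineMap.const ℝ E σ))
  have hA : (fun w : E => √(‖w‖ ^ 2 + σ ^ 2)) = norm ∘ A := by
    ext w
    simp [A, WithLp.prod_norm_eq_of_L2]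
  rw [hA]
  exact convexOn_univ_norm.comp_affineMap A

theorem sqrt_norm_sq_add_sq_le_iff {E : Type*} [SeminormedAddCommGroup E] {σ C : ℝ} (hC : 0 ≤ C)
    {w : E} : √(‖w‖ ^ 2 + σ ^ 2) ≤ √(C ^ 2 + σ ^ 2) ↔ ‖w‖ ≤ C := by
  rw [Real.sqrt_le_sqrt_iff (by positivity), add_le_add_iff_right, sq_le_sq₀ (norm_nonneg w) hC]

variable {E : Type*} [NormedAddCommGroup E] [InnerProductSpace ℝ E]

theorem inner_add_mul_le_sqrt_mul_sqrt (x y : E) (σ τ : ℝ) :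
    ⟪x, y⟫ + σ * τ ≤ √(‖x‖ ^ 2 + σ ^ 2) * √(‖y‖ ^ 2 + τ ^ 2) := by
  simpa [WithLp.prod_norm_eq_of_L2, WithLp.prod_inner_apply, mul_comm] using
    real_inner_le_norm (WithLp.toLp 2 (x, σ)) (WithLp.toLp 2 (y, τ))

theorem mul_sqrt_le_sqrt_mul_add_inner {c : E} {G : ℝ} (hc : ‖c‖ ≤ G) (σ : ℝ) (w : E) :
    σ * √(G ^ 2 - ‖c‖ ^ 2) ≤ √(‖w‖ ^ 2 + σ ^ 2) * G + ⟪c, w⟫ := by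
  have hG : 0 ≤ G := (norm_nonneg c).trans hc
  have hsq : 0 ≤ G ^ 2 - ‖c‖ ^ 2 := sub_nonneg.mpr (by gcongr)
  have hcs := inner_add_mul_le_sqrt_mul_sqrt w (-c) σ √(G ^ 2 - ‖c‖ ^ 2)
  rw [norm_neg, Real.sq_sqrt hsq, add_sub_cancel, Real.sqrt_sq hG, inner_neg_right,
    real_inner_comm] at hcs
  linarith

-- The minimiser is where Cauchy–Schwarz is an equality: `(w, σ)` is parallel to
-- `(-c, √(G² - ‖c‖²))`.
theorem exists_sqrt_mul_add_inner_eq {c : E} {G σ : ℝ} (hc : ‖c‖ < G) (hσ : 0 ≤ σ) :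
    ∃ w : E, √(‖w‖ ^ 2 + σ ^ 2) * G + ⟪c, w⟫ = σ * √(G ^ 2 - ‖c‖ ^ 2) := by
  have hG : 0 ≤ G := (norm_nonneg c).trans hc.le
  have hsq : 0 < G ^ 2 - ‖c‖ ^ 2 := sub_pos.mpr (by gcongr)
  set D := √(G ^ 2 - ‖c‖ ^ 2)
  have hD_pos : 0 < D := Real.sqrt_pos.mpr hsq
  have hD_sq : D ^ 2 = G ^ 2 - ‖c‖ ^ 2 := Real.sq_sqrt hsq.le
  refine ⟨-(σ / D) • c, ?_⟩
  have hroot : ‖-(σ / D) • c‖ ^ 2 + σ ^ 2 = (σ / D * G) ^ 2 := by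
    rw [norm_smul, mul_pow, norm_neg, Real.norm_eq_abs, sq_abs]
    field_simp
    linear_combination σ ^ 2 * hD_sq
  rw [hroot, Real.sqrt_sq (by positivity), real_inner_smul_right, real_inner_self_eq_norm_sq]
  field_simp
  linear_combination -σ * hD_sq

theorem norm_le_of_forall_le_sqrt_mul_add_inner {c : E} {G σ K : ℝ} (hG : 0 ≤ G) (hσ : 0 ≤ σ)
    (H : ∀ w : E, K ≤ √(‖w‖ ^ 2 + σ ^ 2) * G + ⟪c, w⟫) : ‖c‖ ≤ G := by
  have hslope : 0 ≤ ‖c‖ * (G - ‖c‖) :=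
    nonneg_of_forall_nonneg_add_mul (b := σ * G - K) fun t ht => by
      have hw := H (-t • c)
      rw [norm_smul, norm_neg, Real.norm_of_nonneg ht, real_inner_smul_right,
        real_inner_self_eq_norm_sq] at hw
      have hsqrt : √((t * ‖c‖) ^ 2 + σ ^ 2) ≤ t * ‖c‖ + σ :=
        Real.sqrt_le_iff.mpr ⟨by positivity,
          by nlinarith [mul_nonneg (mul_nonneg ht (norm_nonneg c)) hσ]⟩
      linarith [mul_le_mul_of_nonneg_right hsqrt hG]
  by_contra! hlt
  exact hslope.not_gt (mul_neg_of_pos_of_neg (hG.trans_lt hlt) (sub_neg.mpr hlt))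

theorem forall_le_sqrt_mul_add_inner_iff {c : E} {G σ K : ℝ} (hG : 0 ≤ G) (hσ : 0 ≤ σ) :
    (∀ w : E, K ≤ √(‖w‖ ^ 2 + σ ^ 2) * G + ⟪c, w⟫) ↔
      ‖c‖ ≤ G ∧ K ≤ σ * √(G ^ 2 - ‖c‖ ^ 2) := by
  refine ⟨fun H => ?_, fun ⟨hc, hK⟩ w => hK.trans (mul_sqrt_le_sqrt_mul_add_inner hc σ w)⟩
  have hc := norm_le_of_forall_le_sqrt_mul_add_inner hG hσ H
  refine ⟨hc, ?_⟩
  -- The infimum need not be attained when `‖c‖ = G`, so `G` is approached from above.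
  have hlim : Tendsto (fun G' => σ * √(G' ^ 2 - ‖c‖ ^ 2)) (𝓝[>] G) (𝓝 (σ * √(G ^ 2 - ‖c‖ ^ 2))) :=
    (Continuous.tendsto (by fun_prop) G).mono_left nhdsWithin_le_nhds
  refine ge_of_tendsto hlim ?_
  filter_upwards [self_mem_nhdsWithin] with G' (hG' : G < G')
  obtain ⟨w, hw⟩ := exists_sqrt_mul_add_inner_eq (hc.trans_lt hG') hσ
  calc K ≤ √(‖w‖ ^ 2 + σ ^ 2) * G + ⟪c, w⟫ := H w
    _ ≤ √(‖w‖ ^ 2 + σ ^ 2) * G' + ⟪c, w⟫ := by gcongr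
    _ = σ * √(G' ^ 2 - ‖c‖ ^ 2) := hw

end Conjugate

section Duality

variable {E ι : Type*} [NormedAddCommGroup E] [InnerProductSpace ℝ E]
  {σ a C : ℝ} {h : E} {v : ι → E} {b : ι → ℝ}

/-- The values of the primal programme: minimise `√(‖w‖² + σ²) a + ⟪h, w⟫` over the part of the ball
of radius `C` cut out by the half-spaces `⟪v i, w⟫ ≤ b i`. -/
def primalValues (σ a C : ℝ) (h : E) (v : ι → E) (b : ι → ℝ) : Set ℝ :=
  (fun w => √(‖w‖ ^ 2 + σ ^ 2) * a + ⟪h, w⟫) '' {w | ‖w‖ ≤ C ∧ ∀ i, ⟪v i, w⟫ ≤ b i}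

/-- The functions whose nonpositivity is the primal feasibility of `w`; the ball is encoded through
`√(‖w‖² + σ²)` so that its multiplier only changes the coefficient `a` in the Lagrangian. -/
noncomputable def primalConstraint (σ C : ℝ) (v : ι → E) (b : ι → ℝ) : Option ι → E → ℝ :=
  fun o => o.elim (fun w => √(‖w‖ ^ 2 + σ ^ 2) - √(C ^ 2 + σ ^ 2)) fun i w => ⟪v i, w⟫ - b i

theorem primalConstraint_nonpos_iff (hC : 0 ≤ C) {w : E} :
    (∀ o, primalConstraint σ C v b o w ≤ 0) ↔ ‖w‖ ≤ C ∧ ∀ i, ⟪v i, w⟫ ≤ b i := by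
  simp only [Option.forall, primalConstraint, Option.elim, sub_nonpos,
    sqrt_norm_sq_add_sq_le_iff hC]

theorem continuous_primalConstraint (o : Option ι) : Continuous (primalConstraint σ C v b o) := by
  cases o <;> simp only [primalConstraint, Option.elim] <;> fun_prop

theorem isCompact_primalConstraint_le [FiniteDimensional ℝ E] (δ : ℝ) :
    IsCompact {w | ∀ o, primalConstraint σ C v b o w ≤ δ} := by
  refine Metric.isCompact_of_isClosed_isBounded ?_ ?_
  · rw [ofPred_forall]
    exact isClosed_iInter fun o => isClosed_le (continuous_primalConstraint o) continuous_const
  · refine (Metric.isBounded_closedBall (x := 0) (r := √(C ^ 2 + σ ^ 2) + δ)).subset fun w hw => ?_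
    rw [mem_closedBall_zero_iff]
    calc ‖w‖ ≤ √(‖w‖ ^ 2 + σ ^ 2) := Real.le_sqrt_of_sq_le (le_add_of_nonneg_right (sq_nonneg σ))
      _ ≤ √(C ^ 2 + σ ^ 2) + δ := sub_le_iff_le_add'.mp (hw none)

theorem convexOn_primalConstraint (o : Option ι) :
    ConvexOn ℝ univ (primalConstraint σ C v b o) := by
  cases o with
  | none => exact (convexOn_sqrt_norm_sq_add_sq σ).sub (concaveOn_const _ convex_univ)
  | some i => exact ((innerₗ E (v i)).convexOn convex_univ).sub (concaveOn_const _ convex_univ)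

theorem convexOn_primalObjective (ha : 0 ≤ a) (h : E) :
    ConvexOn ℝ univ fun w => √(‖w‖ ^ 2 + σ ^ 2) * a + ⟪h, w⟫ := by
  have hnorm := (convexOn_sqrt_norm_sq_add_sq (E := E) σ).smul ha
  simp only [smul_eq_mul, mul_comm a] at hnorm
  exact hnorm.add ((innerₗ E h).convexOn convex_univ)

variable [Fintype ι]

/-- The values of the Lagrange dual programme, with a multiplier `μ i` for each half-space and a
multiplier `γ` for the ball, taken in the form `√(‖w‖² + σ²) ≤ √(C² + σ²)`. -/
def dualValues (σ a C : ℝ) (h : E) (v : ι → E) (b : ι → ℝ) : Set ℝ :=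
  {z | ∃ μ : ι → ℝ, ∃ γ : ℝ, 0 ≤ μ ∧ 0 ≤ γ ∧ ‖h + ∑ i, μ i • v i‖ ≤ a + γ ∧
    z = σ * √((a + γ) ^ 2 - ‖h + ∑ i, μ i • v i‖ ^ 2) - ∑ i, μ i * b i - γ * √(C ^ 2 + σ ^ 2)}

theorem dualValues_nonempty (ha : 0 ≤ a) : (dualValues σ a C h v b).Nonempty :=
  ⟨_, 0, ‖h‖, le_rfl, norm_nonneg h, by simpa using ha, rfl⟩

theorem sqrt_mul_add_inner_eq_lagrangian (μ : Option ι → ℝ) (w : E) :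
    √(‖w‖ ^ 2 + σ ^ 2) * (a + μ none) + ⟪h + ∑ i, μ (some i) • v i, w⟫ =
      √(‖w‖ ^ 2 + σ ^ 2) * a + ⟪h, w⟫ + ∑ o, μ o * primalConstraint σ C v b o w +
        ∑ i, μ (some i) * b i + μ none * √(C ^ 2 + σ ^ 2) := by
  simp only [Fintype.sum_option, primalConstraint, Option.elim, inner_add_left, sum_inner,
    real_inner_smul_left, mul_sub, Finset.sum_sub_distrib]
  ring

theorem dualValues_le_primalValues {z y : ℝ} (hz : z ∈ dualValues σ a C h v b)
    (hy : y ∈ primalValues σ a C h v b) : z ≤ y := by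
  obtain ⟨μ, γ, hμ, hγ, hnorm, rfl⟩ := hz
  obtain ⟨w, hw, rfl⟩ := hy
  have hC : 0 ≤ C := (norm_nonneg w).trans hw.1
  let μ' : Option ι → ℝ := fun o => o.elim γ μ
  have hμ' : ∀ o, 0 ≤ μ' o := Option.forall.mpr ⟨hγ, hμ⟩
  have hpenalty : ∑ o, μ' o * primalConstraint σ C v b o w ≤ 0 := Finset.sum_nonpos fun o _ =>
    mul_nonpos_of_nonneg_of_nonpos (hμ' o) ((primalConstraint_nonpos_iff hC).mpr hw o)
  have hinf := mul_sqrt_le_sqrt_mul_add_inner hnorm σ w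
  have hlag := sqrt_mul_add_inner_eq_lagrangian (σ := σ) (a := a) (C := C) (h := h) (v := v)
    (b := b) μ' w
  simp only [μ', Option.elim] at hlag hpenalty
  dsimp only
  linarith

theorem exists_mem_dualValues_ge [FiniteDimensional ℝ E] (hσ : 0 ≤ σ) (ha : 0 ≤ a)
    (hne : (primalValues σ a C h v b).Nonempty) {p : ℝ}
    (hp : ∀ y ∈ primalValues σ a C h v b, p < y) : ∃ z ∈ dualValues σ a C h v b, p ≤ z := by
  obtain ⟨_, w₀, hw₀, -⟩ := hne
  have hC : 0 ≤ C := (norm_nonneg w₀).trans hw₀.1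
  obtain ⟨μ, hμ, hlag⟩ := exists_lagrange_multipliers_of_isCompact
    (convexOn_primalObjective ha h) convexOn_primalConstraint (by fun_prop)
    continuous_primalConstraint one_pos (isCompact_primalConstraint_le (σ := σ) 1)
    ((primalConstraint_nonpos_iff hC).mpr hw₀)
    fun w hw => hp _ ⟨w, (primalConstraint_nonpos_iff hC).mp hw, rfl⟩
  have hmin : ∀ w, p + ∑ i, μ (some i) * b i + μ none * √(C ^ 2 + σ ^ 2) ≤
      √(‖w‖ ^ 2 + σ ^ 2) * (a + μ none) + ⟪h + ∑ i, μ (some i) • v i, w⟫ := fun w => by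
    rw [sqrt_mul_add_inner_eq_lagrangian (C := C) (b := b)]
    gcongr
    exact hlag w
  obtain ⟨hnorm, hp_le⟩ := (forall_le_sqrt_mul_add_inner_iff (add_nonneg ha (hμ none)) hσ).mp hmin
  exact ⟨_, ⟨fun i => μ (some i), μ none, fun i => hμ _, hμ none, hnorm, rfl⟩, by linarith⟩

theorem sInf_primalValues_eq_sSup_dualValues [FiniteDimensional ℝ E] (hσ : 0 ≤ σ) (ha : 0 ≤ a)
    (hne : (primalValues σ a C h v b).Nonempty) :
    sInf (primalValues σ a C h v b) = sSup (dualValues σ a C h v b) := by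
  obtain ⟨z₀, hz₀⟩ : (dualValues σ a C h v b).Nonempty := dualValues_nonempty ha
  have hbdd : BddBelow (primalValues σ a C h v b) := ⟨z₀, fun y => dualValues_le_primalValues hz₀⟩
  refine (csSup_eq_of_forall_le_of_forall_lt_exists_gt ⟨z₀, hz₀⟩
    (fun z hz => le_csInf hne fun y => dualValues_le_primalValues hz) fun q hq => ?_).symm
  obtain ⟨p, hqp, hp⟩ := exists_between hq
  obtain ⟨z, hz, hpz⟩ := exists_mem_dualValues_ge hσ ha hne
    fun y hy => hp.trans_le (csInf_le hbdd hy)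
  exact ⟨z, hz, hqp.trans_le hpz⟩

end Duality

section SignedLasso

variable {ι : Type*} [Fintype ι]

/-- The normals of the half-spaces `∑ i, w i ≤ 0` (index `none`) and `-w i ≤ x i` (index `some i`),
whose intersection is the signed descent set at `x`. -/
noncomputable def signedNormal : Option ι → EuclideanSpace ℝ ι :=
  fun o => o.elim (WithLp.toLp 2 1) fun i => -EuclideanSpace.basisFun ι ℝ i

/-- The offsets of the half-spaces with normals `signedNormal`. -/
def signedOffset (x : ι → ℝ) : Option ι → ℝ := fun o => o.elim 0 x

theorem forall_inner_signedNormal_le_iff {x w : ι → ℝ} :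
    (∀ o, ⟪signedNormal o, WithLp.toLp 2 w⟫ ≤ signedOffset x o) ↔
      ∑ i, w i ≤ 0 ∧ ∀ i, 0 ≤ x i + w i := by
  have hsum : ⟪WithLp.toLp 2 1, WithLp.toLp 2 w⟫ = ∑ i, w i := by simp [PiLp.inner_apply]
  simp only [Option.forall, signedNormal, signedOffset, Option.elim, hsum, inner_neg_left,
    EuclideanSpace.basisFun_inner, neg_le_iff_add_nonneg]

theorem add_sum_smul_signedNormal (h : ι → ℝ) (μ : Option ι → ℝ) :
    WithLp.toLp 2 h + ∑ o, μ o • signedNormal o =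
      WithLp.toLp 2 fun i => h i + μ none - μ (some i) := by
  have hbasis : ∑ i, μ (some i) • EuclideanSpace.basisFun ι ℝ i =
      WithLp.toLp 2 fun i => μ (some i) :=
    (EuclideanSpace.basisFun ι ℝ).sum_repr (WithLp.toLp 2 fun i => μ (some i))
  ext i
  simp only [Fintype.sum_option, signedNormal, Option.elim, smul_neg, Finset.sum_neg_distrib,
    hbasis, PiLp.add_apply, PiLp.smul_apply, PiLp.neg_apply, Pi.one_apply, smul_eq_mul, mul_one]
  ring

theorem primalValues_signed (σ a C : ℝ) (h x : ι → ℝ) :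
    primalValues σ a C (WithLp.toLp 2 h) signedNormal (signedOffset x) =
      (fun w : ι → ℝ => √(‖WithLp.toLp 2 w‖ ^ 2 + σ ^ 2) * a + ∑ i, h i * w i) ''
        {w | ‖WithLp.toLp 2 w‖ ≤ C ∧ ∑ i, w i ≤ 0 ∧ ∀ i, 0 ≤ x i + w i} := by
  ext y
  simp only [primalValues, mem_image, mem_ofPred_eq, (WithLp.toLp_surjective 2).exists,
    forall_inner_signedNormal_le_iff]
  simp [PiLp.inner_apply, mul_comm]

theorem dualValues_signed (σ a C : ℝ) (h x : ι → ℝ) :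
    dualValues σ a C (WithLp.toLp 2 h) signedNormal (signedOffset x) =
      {z | ∃ ν : ℝ, ∃ lam : ι → ℝ, ∃ γ : ℝ, 0 ≤ ν ∧ (∀ i, 0 ≤ lam i) ∧ 0 ≤ γ ∧
        ‖WithLp.toLp 2 fun i => h i + ν - lam i‖ ≤ a + γ ∧
        z = σ * √((a + γ) ^ 2 - ‖WithLp.toLp 2 fun i => h i + ν - lam i‖ ^ 2)
          - ∑ i, lam i * x i - γ * √(C ^ 2 + σ ^ 2)} := by
  ext z
  have hoffset (μ : Option ι → ℝ) : ∑ o, μ o * signedOffset x o = ∑ i, μ (some i) * x i := by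
    simp only [Fintype.sum_option, signedOffset, Option.elim, mul_zero, zero_add]
  simp only [dualValues, mem_ofPred_eq, add_sum_smul_signedNormal, hoffset]
  constructor
  · rintro ⟨μ, γ, hμ, hγ, hnorm, rfl⟩
    exact ⟨μ none, fun i => μ (some i), γ, hμ none, fun i => hμ (some i), hγ, hnorm, rfl⟩
  · rintro ⟨ν, lam, γ, hν, hlam, hγ, hnorm, rfl⟩
    exact ⟨fun o => o.elim ν lam, γ, Option.forall.mpr ⟨hν, hlam⟩, hγ, hnorm, rfl⟩

theorem lasso_stmt9_general {σ a C : ℝ} (hσ : 0 ≤ σ) (ha : 0 ≤ a) (hC : 0 ≤ C) (h : ι → ℝ)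
    {x : ι → ℝ} (hx : ∀ i, 0 ≤ x i) :
    sInf ((fun w : ι → ℝ => √(‖WithLp.toLp 2 w‖ ^ 2 + σ ^ 2) * a + ∑ i, h i * w i) ''
        {w | ‖WithLp.toLp 2 w‖ ≤ C ∧ ∑ i, w i ≤ 0 ∧ ∀ i, 0 ≤ x i + w i}) =
      sSup {z | ∃ ν : ℝ, ∃ lam : ι → ℝ, ∃ γ : ℝ, 0 ≤ ν ∧ (∀ i, 0 ≤ lam i) ∧ 0 ≤ γ ∧
        ‖WithLp.toLp 2 fun i => h i + ν - lam i‖ ≤ a + γ ∧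
        z = σ * √((a + γ) ^ 2 - ‖WithLp.toLp 2 fun i => h i + ν - lam i‖ ^ 2)
          - ∑ i, lam i * x i - γ * √(C ^ 2 + σ ^ 2)} := by
  rw [← primalValues_signed, ← dualValues_signed]
  refine sInf_primalValues_eq_sSup_dualValues hσ ha ?_
  rw [primalValues_signed]
  exact ⟨_, 0, ⟨by simpa using hC, by simp, by simpa using hx⟩, rfl⟩

end SignedLasso

theorem e2norm_eq_norm {d : ℕ} (x : Fin d → ℝ) : e2norm x = ‖WithLp.toLp 2 x‖ := by
  simp [e2norm, EuclideanSpace.norm_eq]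

theorem tailSum_eq_sum {n k : ℕ} {x : Fin n → ℝ} (hx : ∀ i : Fin n, (i : ℕ) < n - k → x i = 0)
    (lam : Fin n → ℝ) : tailSum k lam x = ∑ i, lam i * x i := by
  refine Finset.sum_filter_of_ne fun i _ hi => ?_
  by_contra! hlt
  exact hi (by rw [hx i hlt, mul_zero])

theorem lasso_stmt9 (m n k : ℕ) (hn : 1 ≤ n) (hk1 : 1 ≤ k) (hkn : k ≤ n)
    (xt : Fin n → ℝ) (hxt : kSparseNonneg n k xt) (hxtpos : ∃ j, 0 < xt j)
    (σ Cw : ℝ) (hσ : 0 < σ) (hCw : 0 < Cw)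
    (g : Fin m → ℝ) (h : Fin n → ℝ) :
    sInf ((fun w : Fin n → ℝ =>
        Real.sqrt (e2norm w ^ 2 + σ ^ 2) * e2norm g + ∑ i, h i * w i) ''
      {w : Fin n → ℝ | e2norm w ≤ Cw ∧ (∑ i, w i) ≤ 0 ∧ ∀ i, 0 ≤ xt i + w i})
    = sSup {z : ℝ | ∃ ν : ℝ, ∃ lam : Fin n → ℝ, ∃ γ : ℝ,
        0 ≤ ν ∧ (∀ i, 0 ≤ lam i) ∧ 0 ≤ γ ∧
        e2norm (fun i => h i + ν - lam i) ≤ e2norm g + γ ∧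
        z = σ * Real.sqrt ((e2norm g + γ) ^ 2
              - e2norm (fun i => h i + ν - lam i) ^ 2)
            - tailSum k lam xt - γ * Real.sqrt (Cw ^ 2 + σ ^ 2)} := by
  simp only [e2norm_eq_norm, tailSum_eq_sum hxt.1]
  exact lasso_stmt9_general hσ.le (norm_nonneg _) hCw.le h hxt.2
end
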